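/- Fix a real number t with 0 < t < 1. Let (a,b,e;c,d,f) be an admissible labeling of the edges of a tetrahedron with a+c ≠ b+d. Then lim_{k→∞} t^{−4k}·{a+2k, b+2k, e; c+2k, d+2k, f+2k}_u = 0 and lim_{k→∞} t^{−4k}·{a+2k, b+2k, e; c+2k, d+2k, f}_u = 0. -/

import Mathlib

open Filter Finset

/-- A triple of nonnegative integers is admissible if its sum is even and
it satisfies every triangle inequality. -/
def Admissible (a b c : ℕ) : Prop :=
  Even (a + b + c) ∧ a ≤ b + c ∧ b ≤ a + c ∧ c ≤ a + b

/-- A labeling (a,b,e;c,d,f) of the edges of a tetrahedron is admissible if the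
four vertex triples (a,d,e), (b,c,e), (a,b,f), (c,d,f) are admissible. -/
def TetAdmissible (a b e c d f : ℕ) : Prop :=
  Admissible a d e ∧ Admissible b c e ∧ Admissible a b f ∧ Admissible c d f

/-- The quantized integer `[n] = (t^{2n} - t^{-2n})/(t^2 - t^{-2})`. -/
noncomputable def qint (t : ℝ) (n : ℕ) : ℝ :=
  (t ^ (2 * n) - (t ^ (2 * n))⁻¹) / (t ^ 2 - (t ^ 2)⁻¹)

/-- The quantized factorial `[n]! = [n]·[n-1]!`, `[0]! = 1`. -/
noncomputable def qfact (t : ℝ) : ℕ → ℝ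
  | 0 => 1
  | n + 1 => qint t (n + 1) * qfact t n

/-- `θ(a,b,c)` for an admissible triple. -/
noncomputable def qtheta (t : ℝ) (a b c : ℕ) : ℝ :=
  (-1 : ℝ) ^ ((a + b + c) / 2) *
    (qfact t ((a + b + c) / 2 + 1) * qfact t ((a + b - c) / 2) *
      qfact t ((a + c - b) / 2) * qfact t ((b + c - a) / 2)) /
    (qfact t a * qfact t b * qfact t c)

/-- Product of the quantized factorials of the strand numbers of a triple. -/
noncomputable def strandProd (t : ℝ) (a b c : ℕ) : ℝ :=
  qfact t ((a + b - c) / 2) * qfact t ((b + c - a) / 2) * qfact t ((a + c - b) / 2)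

/-- The tetrahedral coefficient `Tet(a,b,e;c,d,f)`. -/
noncomputable def Tet (t : ℝ) (a b e c d f : ℕ) : ℝ :=
  (strandProd t a d e * strandProd t b c e * strandProd t a b f * strandProd t c d f) /
      (qfact t a * qfact t b * qfact t c * qfact t d * qfact t e * qfact t f) *
    ∑ s ∈ Finset.Icc
        (max ((a + d + e) / 2) (max ((b + c + e) / 2) (max ((a + b + f) / 2) ((c + d + f) / 2))))
        (min ((a + b + c + d) / 2) (min ((a + c + e + f) / 2) ((b + d + e + f) / 2))),
      ((-1 : ℝ) ^ s * qfact t (s + 1)) /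
        (qfact t ((a + b + c + d) / 2 - s) * qfact t ((a + c + e + f) / 2 - s) *
          qfact t ((b + d + e + f) / 2 - s) *
          qfact t (s - (a + d + e) / 2) * qfact t (s - (b + c + e) / 2) *
          qfact t (s - (a + b + f) / 2) * qfact t (s - (c + d + f) / 2))

/-- The unitary 6j-symbol `{a,b,e;c,d,f}_u`. -/
noncomputable def sixj (t : ℝ) (a b e c d f : ℕ) : ℝ :=
  Tet t a b e c d f /
    Real.sqrt (qtheta t a d e * qtheta t b c e * qtheta t a b f * qtheta t c d f)

/-- The q-Pochhammer symbol `(x;q)_n`. -/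
noncomputable def qPoch (x q : ℝ) (n : ℕ) : ℝ := ∏ i ∈ Finset.range n, (1 - x * q ^ i)

/-- The infinite q-Pochhammer symbol `(x;q)_∞`. -/
noncomputable def qPochInf (x q : ℝ) : ℝ := ∏' i : ℕ, (1 - x * q ^ i)

theorem qint_succ_eq_exp {t : ℝ} (ht0 : 0 < t) (ht1 : t < 1) (n : ℕ) :
    qint t (n + 1) = Real.exp (-Real.log t * (2 * n) - Real.log (1 - t ^ 4)
      + Real.log (1 - (t ^ 4) ^ (n + 1))) := by
  have hq : t ^ 4 < 1 := pow_lt_one₀ ht0.le ht1 (by norm_num)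
  have hqn : (t ^ 4) ^ (n + 1) < 1 := pow_lt_one₀ (by positivity) hq (by simp)
  have h1 : Real.exp (-Real.log t * (2 * n)) = (t ^ (2 * n))⁻¹ := by
    rw [neg_mul, Real.exp_neg, Real.exp_mul, Real.exp_log ht0]
    norm_cast
  rw [Real.exp_add, Real.exp_sub, Real.exp_log (by linarith), Real.exp_log (by linarith), h1]
  have h2 : t ^ 2 - (t ^ 2)⁻¹ = -(1 - t ^ 4) / t ^ 2 := by
    field_simp
    ring
  have h3 : t ^ (2 * (n + 1)) - (t ^ (2 * (n + 1)))⁻¹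
      = -(1 - (t ^ 4) ^ (n + 1)) / t ^ (2 * (n + 1)) := by
    field_simp
    ring
  have h4 : (1 - t ^ 4) ≠ 0 := by linarith
  rw [qint, h2, h3]
  field_simp
  ring

theorem qfact_pos {t : ℝ} (ht0 : 0 < t) (ht1 : t < 1) (n : ℕ) : 0 < qfact t n := by
  induction n with
  | zero => simp [qfact]
  | succ n ih =>
    rw [qfact, qint_succ_eq_exp ht0 ht1]
    positivity

/-- Up to a bounded error, `log [n]!` is a quadratic polynomial in `n`. -/
theorem exists_abs_log_qfact_sub_le {t : ℝ} (ht0 : 0 < t) (ht1 : t < 1) :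
    ∃ C, ∀ n : ℕ, |Real.log (qfact t n) - (-Real.log t * (n * (n - 1))
      - n * Real.log (1 - t ^ 4))| ≤ C := by
  have hq : t ^ 4 < 1 := pow_lt_one₀ ht0.le ht1 (by norm_num)
  have hq0 : 0 < t ^ 4 := by positivity
  set q := t ^ 4 with hqdef
  have h1q : 0 < 1 - q := by linarith
  have key : ∀ n : ℕ,
      -(q / (1 - q) ^ 2 * (1 - q ^ n)) ≤ Real.log (qfact t n) - (-Real.log t * (n * (n - 1))
        - n * Real.log (1 - q)) ∧
      Real.log (qfact t n) - (-Real.log t * (n * (n - 1)) - n * Real.log (1 - q)) ≤ 0 := by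
    intro n
    induction n with
    | zero => simp [qfact]
    | succ n ih =>
      have hqn : q ^ (n + 1) ≤ q := pow_le_of_le_one hq0.le hq.le (by simp)
      have hqn0 : 0 < q ^ (n + 1) := by positivity
      have hpos : 0 < 1 - q ^ (n + 1) := by linarith
      have hlog : Real.log (qfact t (n + 1)) = -Real.log t * (2 * n) - Real.log (1 - q)
          + Real.log (1 - q ^ (n + 1)) + Real.log (qfact t n) := by
        rw [qfact, qint_succ_eq_exp ht0 ht1,
          Real.log_mul (Real.exp_pos _).ne' (qfact_pos ht0 ht1 n).ne', Real.log_exp]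
      have hlow : -(q ^ (n + 1) / (1 - q)) ≤ Real.log (1 - q ^ (n + 1)) := by
        have hbase := Real.one_sub_inv_le_log_of_pos hpos
        have hinv : 1 - (1 - q ^ (n + 1))⁻¹ = -(q ^ (n + 1) / (1 - q ^ (n + 1))) := by
          field_simp
          ring
        have hdiv : q ^ (n + 1) / (1 - q ^ (n + 1)) ≤ q ^ (n + 1) / (1 - q) := by gcongr
        linarith
      have hup : Real.log (1 - q ^ (n + 1)) ≤ 0 := Real.log_nonpos hpos.le (by linarith)
      have hstep : q / (1 - q) ^ 2 * (1 - q ^ (n + 1))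
          = q / (1 - q) ^ 2 * (1 - q ^ n) + q ^ (n + 1) / (1 - q) := by
        field_simp
        ring
      rw [hlog, hstep]
      push_cast
      constructor <;> linarith
  refine ⟨q / (1 - q) ^ 2, fun n => abs_le.2 ⟨?_, (key n).2.trans (by positivity)⟩⟩
  refine le_trans ?_ (key n).1
  have : q / (1 - q) ^ 2 * (1 - q ^ n) ≤ q / (1 - q) ^ 2 * 1 := by
    gcongr
    have : 0 < q ^ n := by positivity
    linarith
  linarith

theorem abs_div_sqrt_le (x y : ℝ) : |x / Real.sqrt y| ≤ |x| / Real.sqrt |y| := by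
  rcases le_total 0 y with hy | hy
  · rw [abs_div, abs_of_nonneg hy, abs_of_nonneg (Real.sqrt_nonneg y)]
  · rw [Real.sqrt_eq_zero_of_nonpos hy]
    simp only [div_zero, abs_zero]
    positivity

/-- Racah's form of the `6j`-symbol, as an upper bound on its absolute value. -/
theorem abs_sixj_le_sum {t : ℝ} {L : ℕ → ℝ} (hL : ∀ n, qfact t n = Real.exp (L n))
    (a b e c d f : ℕ) :
    |sixj t a b e c d f| ≤ ∑ s ∈ Finset.Icc
        (max ((a + d + e) / 2) (max ((b + c + e) / 2) (max ((a + b + f) / 2) ((c + d + f) / 2))))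
        (min ((a + b + c + d) / 2) (min ((a + c + e + f) / 2) ((b + d + e + f) / 2))),
      Real.exp (
        (L ((a + d - e) / 2) + L ((d + e - a) / 2) + L ((a + e - d) / 2)
          - L ((a + d + e) / 2 + 1)) / 2 +
        (L ((b + c - e) / 2) + L ((c + e - b) / 2) + L ((b + e - c) / 2)
          - L ((b + c + e) / 2 + 1)) / 2 +
        (L ((a + b - f) / 2) + L ((b + f - a) / 2) + L ((a + f - b) / 2)
          - L ((a + b + f) / 2 + 1)) / 2 +
        (L ((c + d - f) / 2) + L ((d + f - c) / 2) + L ((c + f - d) / 2)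
          - L ((c + d + f) / 2 + 1)) / 2 +
        (L (s + 1) - L ((a + b + c + d) / 2 - s) - L ((a + c + e + f) / 2 - s)
          - L ((b + d + e + f) / 2 - s) - L (s - (a + d + e) / 2) - L (s - (b + c + e) / 2)
          - L (s - (a + b + f) / 2) - L (s - (c + d + f) / 2))) := by
  refine (abs_div_sqrt_le _ _).trans ?_
  unfold Tet qtheta strandProd
  simp only [hL, abs_mul, abs_div, abs_pow, abs_neg, abs_one, one_pow, one_mul, Real.abs_exp,
    ← Real.exp_add, ← Real.exp_sub, ← Real.exp_half]
  rw [mul_div_right_comm, ← Real.exp_sub]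
  refine (mul_le_mul_of_nonneg_left (Finset.abs_sum_le_sum_abs _ _) (Real.exp_pos _).le).trans
    (le_of_eq ?_)
  rw [Finset.mul_sum]
  refine Finset.sum_congr rfl fun s _ => ?_
  simp only [abs_mul, abs_div, abs_pow, abs_neg, abs_one, one_pow, one_mul, Real.abs_exp,
    ← Real.exp_add, ← Real.exp_sub]
  congr 1
  ring

theorem Admissible.cast_strand {a b c : ℕ} (h : Admissible a b c) :
    (((a + b - c) / 2 : ℕ) : ℝ) = (a + b - c) / 2 ∧
    (((b + c - a) / 2 : ℕ) : ℝ) = (b + c - a) / 2 ∧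
    (((a + c - b) / 2 : ℕ) : ℝ) = (a + c - b) / 2 := by
  obtain ⟨⟨n, hn⟩, h1, h2, h3⟩ := h
  have e1 : n - c + c = n := by omega
  have e2 : n - a + a = n := by omega
  have e3 : n - b + b = n := by omega
  rw [show (a + b - c) / 2 = n - c by omega, show (b + c - a) / 2 = n - a by omega,
    show (a + c - b) / 2 = n - b by omega]
  have hn' : (a : ℝ) + b + c = n + n := by exact_mod_cast hn
  have e1' : ((n - c : ℕ) : ℝ) + c = n := by exact_mod_cast e1
  have e2' : ((n - a : ℕ) : ℝ) + a = n := by exact_mod_cast e2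
  have e3' : ((n - b : ℕ) : ℝ) + b = n := by exact_mod_cast e3
  refine ⟨?_, ?_, ?_⟩ <;> linarith

theorem cast_half_of_even {n : ℕ} (h : Even n) : ((n / 2 : ℕ) : ℝ) = (n : ℝ) / 2 := by
  rw [Nat.cast_div h.two_dvd (by norm_num)]
  norm_num

/-- Half the degree of the square of `∏ [x_i]! / [x_1 + x_2 + x_3 + 1]!` over the strand numbers
`x_i` of the triple `(a,b,c)`. -/
noncomputable def triangleDegree (a b c : ℝ) : ℝ :=
  ((a + b - c) / 2 * ((a + b - c) / 2 - 1) + (b + c - a) / 2 * ((b + c - a) / 2 - 1)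
    + (a + c - b) / 2 * ((a + c - b) / 2 - 1) - ((a + b + c) / 2 + 1) * ((a + b + c) / 2)) / 2

/-- The degree in `t⁻¹` of the summand with index `s` in Racah's form of the `6j`-symbol. -/
noncomputable def racahDegree (a b e c d f s : ℝ) : ℝ :=
  triangleDegree a d e + triangleDegree b c e + triangleDegree a b f + triangleDegree c d f
    + ((s + 1) * s
      - ((a + b + c + d) / 2 - s) * ((a + b + c + d) / 2 - s - 1)
      - ((a + c + e + f) / 2 - s) * ((a + c + e + f) / 2 - s - 1)
      - ((b + d + e + f) / 2 - s) * ((b + d + e + f) / 2 - s - 1)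
      - (s - (a + d + e) / 2) * (s - (a + d + e) / 2 - 1)
      - (s - (b + c + e) / 2) * (s - (b + c + e) / 2 - 1)
      - (s - (a + b + f) / 2) * (s - (a + b + f) / 2 - 1)
      - (s - (c + d + f) / 2) * (s - (c + d + f) / 2 - 1))

theorem exists_abs_sixj_le {t : ℝ} (ht0 : 0 < t) (ht1 : t < 1) :
    ∃ K : ℝ, ∀ a b e c d f : ℕ, TetAdmissible a b e c d f →
      |sixj t a b e c d f| ≤ ∑ s ∈ Finset.Icc
        (max ((a + d + e) / 2) (max ((b + c + e) / 2) (max ((a + b + f) / 2) ((c + d + f) / 2))))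
        (min ((a + b + c + d) / 2) (min ((a + c + e + f) / 2) ((b + d + e + f) / 2))),
        Real.exp (K + -Real.log t * racahDegree a b e c d f s) := by
  obtain ⟨C, hC⟩ := exists_abs_log_qfact_sub_le ht0 ht1
  refine ⟨16 * C + Real.log (1 - t ^ 4), fun a b e c d f h => ?_⟩
  refine (abs_sixj_le_sum (L := fun n => Real.log (qfact t n))
    (fun n => (Real.exp_log (qfact_pos ht0 ht1 n)).symm) a b e c d f).trans ?_
  refine Finset.sum_le_sum fun s hs => Real.exp_le_exp.2 ?_
  obtain ⟨h1, h2, h3, h4⟩ := h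
  simp only [Finset.mem_Icc, max_le_iff, le_min_iff] at hs
  obtain ⟨⟨l1, l2, l3, l4⟩, u1, u2, u3⟩ := hs
  have p1 := h1.1
  have p2 := h2.1
  have p3 := h3.1
  have p4 := h4.1
  have q1 : Even (a + b + c + d) := by
    simp only [Nat.even_iff] at *
    omega
  have q2 : Even (a + c + e + f) := by
    simp only [Nat.even_iff] at *
    omega
  have q3 : Even (b + d + e + f) := by
    simp only [Nat.even_iff] at *
    omega
  obtain ⟨x1, x2, x3⟩ := h1.cast_strand
  obtain ⟨y1, y2, y3⟩ := h2.cast_strand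
  obtain ⟨z1, z2, z3⟩ := h3.cast_strand
  obtain ⟨w1, w2, w3⟩ := h4.cast_strand
  have hl := fun n => (abs_le.1 (hC n)).1
  have hu := fun n => (abs_le.1 (hC n)).2
  have X1 := hu ((a + d - e) / 2)
  have X2 := hu ((d + e - a) / 2)
  have X3 := hu ((a + e - d) / 2)
  have X4 := hl ((a + d + e) / 2 + 1)
  have Y1 := hu ((b + c - e) / 2)
  have Y2 := hu ((c + e - b) / 2)
  have Y3 := hu ((b + e - c) / 2)
  have Y4 := hl ((b + c + e) / 2 + 1)
  have Z1 := hu ((a + b - f) / 2)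
  have Z2 := hu ((b + f - a) / 2)
  have Z3 := hu ((a + f - b) / 2)
  have Z4 := hl ((a + b + f) / 2 + 1)
  have W1 := hu ((c + d - f) / 2)
  have W2 := hu ((d + f - c) / 2)
  have W3 := hu ((c + f - d) / 2)
  have W4 := hl ((c + d + f) / 2 + 1)
  have S0 := hu (s + 1)
  have S1 := hl ((a + b + c + d) / 2 - s)
  have S2 := hl ((a + c + e + f) / 2 - s)
  have S3 := hl ((b + d + e + f) / 2 - s)
  have S4 := hl (s - (a + d + e) / 2)
  have S5 := hl (s - (b + c + e) / 2)
  have S6 := hl (s - (a + b + f) / 2)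
  have S7 := hl (s - (c + d + f) / 2)
  rw [Nat.cast_sub u1, cast_half_of_even q1] at S1
  rw [Nat.cast_sub u2, cast_half_of_even q2] at S2
  rw [Nat.cast_sub u3, cast_half_of_even q3] at S3
  rw [Nat.cast_sub l1, cast_half_of_even p1] at S4
  rw [Nat.cast_sub l2, cast_half_of_even p2] at S5
  rw [Nat.cast_sub l3, cast_half_of_even p3] at S6
  rw [Nat.cast_sub l4, cast_half_of_even p4] at S7
  rw [Nat.cast_add, cast_half_of_even p1] at X4
  rw [Nat.cast_add, cast_half_of_even p2] at Y4
  rw [Nat.cast_add, cast_half_of_even p3] at Z4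
  rw [Nat.cast_add, cast_half_of_even p4] at W4
  rw [x1] at X1
  rw [x2] at X2
  rw [x3] at X3
  rw [y1] at Y1
  rw [y2] at Y2
  rw [y3] at Y3
  rw [z1] at Z1
  rw [z2] at Z2
  rw [z3] at Z3
  rw [w1] at W1
  rw [w2] at W2
  rw [w3] at W3
  push_cast at *
  unfold racahDegree triangleDegree
  linarith

theorem racahDegree_shift_five (a b e c d f s k : ℝ) :
    racahDegree (a + 2 * k) (b + 2 * k) e (c + 2 * k) (d + 2 * k) (f + 2 * k) (s + 3 * k)
      = racahDegree a b e c d f s - 4 * k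
        + k * (4 * s - (a + b + c + d + 2 * e + 2 * f)) := by
  unfold racahDegree triangleDegree
  ring

theorem racahDegree_shift_four (a b e c d f s k : ℝ) :
    racahDegree (a + 2 * k) (b + 2 * k) e (c + 2 * k) (d + 2 * k) f (s + 2 * k)
      = racahDegree a b e c d f s - 4 * k
        + k * (8 * s - 2 * (a + b + c + d + 2 * e + 2 * f)) := by
  unfold racahDegree triangleDegree
  ring

theorem tendsto_zero_of_abs_le_sum_exp {F : ℕ → ℝ} {S : Finset ℕ} {u v : ℕ → ℝ}
    (hF : ∀ k : ℕ, |F k| ≤ ∑ j ∈ S, Real.exp (u j + k * v j)) (hv : ∀ j ∈ S, v j < 0) :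
    Filter.Tendsto F Filter.atTop (nhds 0) := by
  refine squeeze_zero_norm hF ?_
  rw [← Finset.sum_const_zero (s := S)]
  refine tendsto_finsetSum _ fun j hj => Real.tendsto_exp_atBot.comp ?_
  exact Filter.tendsto_atBot_add_const_left _ _
    (tendsto_natCast_atTop_atTop.atTop_mul_const_of_neg (hv j hj))

theorem sum_Icc_le_sum_range_add {m M r N : ℕ} {g : ℕ → ℝ} (hg : ∀ s, 0 ≤ g s) (hm : r ≤ m)
    (hM : M ≤ N + r) : ∑ s ∈ Finset.Icc m M, g s ≤ ∑ j ∈ Finset.range (N + 1), g (j + r) := by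
  have himg : ∑ j ∈ Finset.range (N + 1), g (j + r)
      = ∑ s ∈ (Finset.range (N + 1)).image (· + r), g s := by
    rw [Finset.sum_image fun x _ y _ hxy => Nat.add_right_cancel hxy]
  rw [himg]
  refine Finset.sum_le_sum_of_subset_of_nonneg (fun s hs => ?_) fun s _ _ => hg s
  rw [Finset.mem_Icc] at hs
  exact Finset.mem_image.2 ⟨s - r, Finset.mem_range.2 (by omega), by omega⟩

theorem inv_pow_four_mul_eq_exp {t : ℝ} (ht0 : 0 < t) (k : ℕ) :
    (t ^ (4 * k))⁻¹ = Real.exp (-Real.log t * (4 * k)) := by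
  rw [← Real.exp_log (inv_pos.2 (pow_pos ht0 (4 * k))), Real.log_inv, Real.log_pow]
  push_cast
  congr 1
  ring

theorem tendsto_scaled_sixj {t : ℝ} (ht0 : 0 < t) (ht1 : t < 1) {a b e c d f : ℕ}
    {f' : ℕ → ℕ} {r N : ℕ} {v : ℕ → ℝ}
    (hadm : ∀ k, TetAdmissible (a + 2 * k) (b + 2 * k) e (c + 2 * k) (d + 2 * k) (f' k))
    (hr : ∀ k, r * k ≤ max ((a + 2 * k + (d + 2 * k) + e) / 2)
      ((a + 2 * k + (b + 2 * k) + f' k) / 2))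
    (hN : ∀ k, min ((a + 2 * k + (c + 2 * k) + e + f' k) / 2)
      ((b + 2 * k + (d + 2 * k) + e + f' k) / 2) ≤ N + r * k)
    (hdeg : ∀ k j : ℕ, racahDegree (a + 2 * k) (b + 2 * k) e (c + 2 * k) (d + 2 * k) (f' k)
      (j + r * k) = racahDegree a b e c d f j - 4 * k + k * v j)
    (hv : ∀ j ≤ N, v j < 0) :
    Filter.Tendsto
      (fun k => (t ^ (4 * k))⁻¹ *
        sixj t (a + 2 * k) (b + 2 * k) e (c + 2 * k) (d + 2 * k) (f' k))
      Filter.atTop (nhds 0) := by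
  obtain ⟨K, hK⟩ := exists_abs_sixj_le ht0 ht1
  have hlog : 0 < -Real.log t := neg_pos.2 (Real.log_neg ht0 ht1)
  refine tendsto_zero_of_abs_le_sum_exp (S := Finset.range (N + 1))
    (u := fun j => K + -Real.log t * racahDegree a b e c d f j)
    (v := fun j => -Real.log t * v j) (fun k => ?_) fun j hj =>
      mul_neg_of_pos_of_neg hlog (hv j (Nat.lt_succ_iff.1 (Finset.mem_range.1 hj)))
  rw [inv_pow_four_mul_eq_exp ht0, abs_mul, Real.abs_exp]
  refine (mul_le_mul_of_nonneg_left ((hK _ _ _ _ _ _ (hadm k)).trans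
    (sum_Icc_le_sum_range_add (r := r * k) (N := N) (fun _ => (Real.exp_pos _).le)
      ?_ ?_)) (Real.exp_pos _).le).trans (le_of_eq ?_)
  · have := hr k
    omega
  · have := hN k
    omega
  · rw [Finset.mul_sum]
    refine Finset.sum_congr rfl fun j _ => ?_
    rw [← Real.exp_add]
    push_cast
    rw [hdeg]
    congr 1
    ring

/-- If a + c ≠ b + d then the limits of the scaled 6j-symbols of
the second and third kinds are zero. -/
theorem stmt_14 (t : ℝ) (ht0 : 0 < t) (ht1 : t < 1) (a b e c d f : ℕ)
    (h : TetAdmissible a b e c d f) (hne : a + c ≠ b + d) :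
    Filter.Tendsto
      (fun k => (t ^ (4 * k))⁻¹ *
        sixj t (a + 2 * k) (b + 2 * k) e (c + 2 * k) (d + 2 * k) (f + 2 * k))
      Filter.atTop (nhds 0) ∧
    Filter.Tendsto
      (fun k => (t ^ (4 * k))⁻¹ *
        sixj t (a + 2 * k) (b + 2 * k) e (c + 2 * k) (d + 2 * k) f)
      Filter.atTop (nhds 0) := by
  obtain ⟨⟨⟨n1, e1⟩, h1⟩, ⟨⟨n2, e2⟩, h2⟩, ⟨⟨n3, e3⟩, h3⟩, ⟨n4, e4⟩, h4⟩ := h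
  have hlt : ∀ j ≤ min ((a + c + e + f) / 2) ((b + d + e + f) / 2),
      4 * (j : ℝ) < a + b + c + d + 2 * e + 2 * f := by
    intro j hj
    have : 4 * j < a + b + c + d + 2 * e + 2 * f := by omega
    exact_mod_cast this
  constructor
  · refine tendsto_scaled_sixj ht0 ht1 (f := f) (r := 3)
      (N := min ((a + c + e + f) / 2) ((b + d + e + f) / 2))
      (v := fun j => 4 * (j : ℝ) - (a + b + c + d + 2 * e + 2 * f))
      (fun k => ?_) (fun k => by omega) (fun k => by omega) (fun k j => ?_)
      (fun j hj => by linarith [hlt j hj])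
    · simp only [TetAdmissible, Admissible, Nat.even_iff]
      omega
    · push_cast
      exact racahDegree_shift_five _ _ _ _ _ _ _ _
  · refine tendsto_scaled_sixj ht0 ht1 (f := f) (r := 2) (f' := fun _ => f)
      (N := min ((a + c + e + f) / 2) ((b + d + e + f) / 2))
      (v := fun j => 8 * (j : ℝ) - 2 * (a + b + c + d + 2 * e + 2 * f))
      (fun k => ?_) (fun k => by omega) (fun k => by omega) (fun k j => ?_)
      (fun j hj => by linarith [hlt j hj])
    · simp only [TetAdmissible, Admissible, Nat.even_iff]
      omega
    · push_cast
      exact racahDegree_shift_four _ _ _ _ _ _ _ _
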